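/- arXiv:2004.11231 — 3 statements merged into one kernel-verified Lean document; each statement's English description precedes it below -/
import Mathlib

section
/- (Unbiasedness of the exploration-scaled CG-DSGLD estimator.) Let S, d, m be positive integers, f : Fin S → ℝ with f s > 0 and ∑_s f s = 1, for each s let N_s be a positive integer and v_{s,1}, …, v_{s,N_s} ∈ ℝ^d, let u_1, …, u_S ∈ ℝ^d, and let α ∈ ℝ. Then ∑_{s=1}^{S} f s · (1/N_s^m) ∑_{φ : Fin m → Fin N_s} [ (N_s/(f s · m)) ∑_{j=1}^{m} v_{s, φ(j)} + α·( ∑_{s'=1}^{S} u_{s'} − (1/(f s)) u_s ) ] = ∑_{s=1}^{S} ∑_{i=1}^{N_s} v_{s,i}. -/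
/-!
Each index of a mini-batch drawn with replacement is uniform on its shard, so the expected
mini-batch gradient of shard `s` is `1 / f s` times the shard gradient, and the selection
probabilities cancel. The conducive gradients have mean zero under `f`, since `∑ s, f s = 1` turns
the first term into `∑ s, u s`, which the second one removes; adding any multiple of them therefore
does not move the mean.
-/

open scoped BigOperators

section Expect

variable {ι M : Type*} [AddCommMonoid M] [Module ℚ≥0 M]

lemma expect_piFinset_apply {κ : Type*} [Fintype κ] [DecidableEq κ] (v : ι → M) (s : Finset ι)
    (j : κ) : 𝔼 φ ∈ Fintype.piFinset fun _ : κ ↦ s, v (φ j) = 𝔼 i ∈ s, v i := by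
  obtain rfl | hs := s.eq_empty_or_nonempty
  · have : Nonempty κ := ⟨j⟩
    simp
  have hcard : (s.card : ℚ≥0) ≠ 0 := mod_cast hs.card_ne_zero
  have hpow : (s.card : ℚ≥0) ^ Fintype.card κ = s.card ^ (Fintype.card κ - 1) * s.card :=
    (pow_sub_one_mul (Fintype.card_pos_iff.2 ⟨j⟩).ne' _).symm
  rw [Finset.expect, Finset.expect, Fintype.sum_piFinset_apply, Fintype.card_piFinset,
    Finset.prod_const, Finset.card_univ, ← Nat.cast_smul_eq_nsmul ℚ≥0, smul_smul]
  push_cast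
  rw [hpow, mul_inv_rev, inv_mul_cancel_right₀ (pow_ne_zero _ hcard)]

lemma expect_eq_inv_card_smul_sum (K : Type*) [DivisionSemiring K] [CharZero K] [Module K M]
    [Fintype ι] (v : ι → M) : 𝔼 i, v i = (Fintype.card ι : K)⁻¹ • ∑ i, v i := by
  rw [Finset.expect, ← NNRat.cast_smul_eq_nnqsmul K, NNRat.cast_inv, NNRat.cast_natCast,
    Finset.card_univ]

end Expect

section Minibatch

variable {K M ι κ : Type*} [Semifield K] [AddCommMonoid M] [Module K M] [Fintype ι] [Fintype κ]

/-- The mini-batch estimator of the full-data gradient, built from the gradients `v` of the points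
of a shard selected with probability `p` and the batch `φ` of point indices, repetitions allowed. -/
def minibatchGradient (p : K) (v : ι → M) (φ : κ → ι) : M :=
  ((Fintype.card ι : K) / (p * Fintype.card κ)) • ∑ j, v (φ j)

lemma smul_expect_minibatchGradient [CharZero K] [Module ℚ≥0 M] [DecidableEq κ] [Nonempty κ]
    {p : K} (hp : p ≠ 0) (v : ι → M) :
    p • 𝔼 φ : κ → ι, minibatchGradient p v φ = ∑ i, v i := by
  have hκ : (Fintype.card κ : K) ≠ 0 := mod_cast Fintype.card_ne_zero
  have hsum : 𝔼 φ : κ → ι, ∑ j, v (φ j) = (Fintype.card κ : K) • 𝔼 i, v i := by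
    have happly (j : κ) : 𝔼 φ : κ → ι, v (φ j) = 𝔼 i, v i := by
      simpa only [Fintype.piFinset_univ] using expect_piFinset_apply v Finset.univ j
    simp only [Finset.expect_sum_comm, happly, Finset.sum_const, Finset.card_univ,
      Nat.cast_smul_eq_nsmul]
  have hscale : p * (Fintype.card ι / (p * Fintype.card κ)) * Fintype.card κ =
      (Fintype.card ι : K) := by
    field_simp
  simp only [minibatchGradient]
  rw [← Finset.smul_expect, hsum, smul_smul, smul_smul, hscale, Nat.cast_smul_eq_nsmul,
    Fintype.card_smul_expect]

end Minibatch

section Conducive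

variable {K M σ : Type*} [AddCommGroup M] [Fintype σ]

/-- The conducive gradient of shard `s`, where `f` gives the selection probabilities of the shards
and `u` the gradients of their log-surrogates. -/
def conduciveGradient [DivisionRing K] [Module K M] (f : σ → K) (u : σ → M) (s : σ) : M :=
  ∑ s', u s' - (1 / f s) • u s

lemma sum_smul_conduciveGradient [DivisionRing K] [Module K M] {f : σ → K} (hf : ∀ s, f s ≠ 0)
    (hsum : ∑ s, f s = 1) (u : σ → M) : ∑ s, f s • conduciveGradient f u s = 0 := by
  simp only [conduciveGradient, smul_sub, smul_smul, mul_one_div_cancel (hf _), one_smul,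
    Finset.sum_sub_distrib, ← Finset.sum_smul, hsum, sub_self]

theorem cgdsgld_alpha_unbiased_general [Field K] [CharZero K] [Module K M] [Module ℚ≥0 M]
    {κ : Type*} [Fintype κ] [DecidableEq κ] [Nonempty κ]
    {ι : σ → Type*} [∀ s, Fintype (ι s)] [∀ s, Nonempty (ι s)]
    {f : σ → K} (hf : ∀ s, f s ≠ 0) (hsum : ∑ s, f s = 1)
    (v : (s : σ) → ι s → M) (u : σ → M) (α : K) :
    ∑ s, f s • 𝔼 φ : κ → ι s, (minibatchGradient (f s) (v s) φ + α • conduciveGradient f u s) =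
      ∑ s, ∑ i, v s i := by
  have hshard (s : σ) :
      f s • 𝔼 φ : κ → ι s, (minibatchGradient (f s) (v s) φ + α • conduciveGradient f u s) =
        ∑ i, v s i + α • f s • conduciveGradient f u s := by
    rw [Finset.expect_add_distrib, Fintype.expect_const, smul_add,
      smul_expect_minibatchGradient (hf s), smul_comm]
  simp only [hshard, Finset.sum_add_distrib, ← Finset.smul_sum,
    sum_smul_conduciveGradient hf hsum, smul_zero, add_zero]

end Conducive

/-- Unbiasedness of the exploration-scaled CG-DSGLD estimator: scaling the
conducive gradient by any constant `α` preserves unbiasedness of the estimator of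
the full-data gradient. -/
theorem cgdsgld_alpha_unbiased (S d m : ℕ) (hS : 0 < S) (hd : 0 < d) (hm : 0 < m)
    (f : Fin S → ℝ) (hf : ∀ s, 0 < f s) (hsum : ∑ s, f s = 1)
    (N : Fin S → ℕ) (hN : ∀ s, 0 < N s)
    (v : (s : Fin S) → Fin (N s) → EuclideanSpace ℝ (Fin d))
    (u : Fin S → EuclideanSpace ℝ (Fin d)) (α : ℝ) :
    ∑ s, f s • ((1 / (N s : ℝ) ^ m) •
        ∑ φ : Fin m → Fin (N s),
          (((N s : ℝ) / (f s * m)) • ∑ j, v s (φ j))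
            + α • ((∑ s', u s') - (1 / f s) • u s))
      = ∑ s, ∑ i, v s i := by
  have : Nonempty (Fin m) := ⟨⟨0, hm⟩⟩
  have (s : Fin S) : Nonempty (Fin (N s)) := ⟨⟨0, hN s⟩⟩
  -- The sum over `φ` ends before `+`: the conducive term stands outside the average over batches.
  simpa [↓Finset.expect_add_distrib, ↓Fintype.expect_const, expect_eq_inv_card_smul_sum ℝ,
    minibatchGradient, conduciveGradient] using
    cgdsgld_alpha_unbiased_general (κ := Fin m) (fun s ↦ (hf s).ne') hsum v u α
end

section
/- (Variance bound for the DSGLD gradient estimator; core of Theorem 1.) Let S, d, m be positive integers, f : Fin S → ℝ with f s > 0 and ∑_s f s = 1, for each s let N_s be a positive integer and v_{s,1}, …, v_{s,N_s} ∈ ℝ^d with ‖v_{s,i}‖ ≤ γ_s for all i, and let V = ∑_{s=1}^{S} ∑_{i=1}^{N_s} v_{s,i}. Consider m independent draws, where each draw j selects a shard s_j with probability f_{s_j} and then an index i_j uniformly from {1, …, N_{s_j}}. Then the expected squared deviation of the estimator from the full-data gradient satisfies E‖ (1/m) ∑_{j=1}^{m} (N_{s_j}/(f_{s_j})) v_{s_j,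 i_j} − V ‖² ≤ (1/m) ∑_{s=1}^{S} (N_s²/(f s)) γ_s². -/
/-!
One draw, reweighted by `N_s / f_s`, is an unbiased estimator of `V`. Cross terms between
independent centred draws vanish in expectation, so averaging `m` of them divides the variance by
`m` exactly. The variance of a single draw is its second moment minus `‖V‖ ^ 2`, and in the second
moment one factor `N_s / f_s` cancels against the sampling probability `f_s / N_s`, leaving
`∑ s, (N_s / f_s) * ∑ i, ‖v_{s,i}‖ ^ 2`.
-/

section WeightedSums

variable {E : Type*} [SeminormedAddCommGroup E] [InnerProductSpace ℝ E]

theorem sum_mul_norm_sub_sq {α : Type*} [Fintype α] {p : α → ℝ} {X : α → E} {μ : E}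
    (hp : ∑ a, p a = 1) (hμ : ∑ a, p a • X a = μ) :
    ∑ a, p a * ‖X a - μ‖ ^ 2 = ∑ a, p a * ‖X a‖ ^ 2 - ‖μ‖ ^ 2 := by
  have expand (a : α) : p a * ‖X a - μ‖ ^ 2 =
      p a * ‖X a‖ ^ 2 - 2 * inner ℝ (p a • X a) μ + p a * ‖μ‖ ^ 2 := by
    rw [norm_sub_sq_real, real_inner_smul_left]
    ring
  simp only [expand, Finset.sum_add_distrib, Finset.sum_sub_distrib, ← Finset.mul_sum,
    ← Finset.sum_mul, ← sum_inner, hμ, hp, real_inner_self_eq_norm_sq]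
  ring

theorem sum_sum_mul_norm_add_sq {α β : Type*} [Fintype α] [Fintype β] {p : α → ℝ} {q : β → ℝ}
    {X : α → E} (Y : β → E) (hp : ∑ a, p a = 1) (hq : ∑ b, q b = 1)
    (hX : ∑ a, p a • X a = 0) :
    ∑ a, ∑ b, p a * q b * ‖X a + Y b‖ ^ 2 =
      ∑ a, p a * ‖X a‖ ^ 2 + ∑ b, q b * ‖Y b‖ ^ 2 := by
  have expand (a : α) (b : β) : p a * q b * ‖X a + Y b‖ ^ 2 =
      p a * ‖X a‖ ^ 2 * q b + 2 * inner ℝ (p a • X a) (q b • Y b) + p a * (q b * ‖Y b‖ ^ 2) := by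
    rw [norm_add_sq_real, real_inner_smul_left, real_inner_smul_right]
    ring
  have cross : ∑ a, ∑ b, inner ℝ (p a • X a) (q b • Y b) = 0 := by
    simp only [← inner_sum, ← sum_inner, hX, inner_zero_left]
  simp only [expand, Finset.sum_add_distrib, ← Finset.mul_sum, ← Finset.sum_mul, cross, hp, hq]
  ring

theorem sum_prod_mul_norm_sum_sq {m : ℕ} {α : Fin m → Type*} [∀ j, Fintype (α j)]
    {p : ∀ j, α j → ℝ} {Y : ∀ j, α j → E} (hp : ∀ j, ∑ a, p j a = 1)
    (hY : ∀ j, ∑ a, p j a • Y j a = 0) :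
    ∑ ω : ∀ j, α j, (∏ j, p j (ω j)) * ‖∑ j, Y j (ω j)‖ ^ 2 =
      ∑ j, ∑ a, p j a * ‖Y j a‖ ^ 2 := by
  induction m with
  | zero => simp
  | succ m ih =>
    have total : ∑ ω : ∀ j : Fin m, α j.succ, ∏ j, p j.succ (ω j) = 1 := by
      rw [← Fintype.prod_sum]
      exact Finset.prod_eq_one fun j _ => hp j.succ
    rw [← (Fin.consEquiv α).sum_comp, Fintype.sum_prod_type]
    simp only [Fin.consEquiv_apply, Fin.prod_univ_succ, Fin.sum_univ_succ, Fin.cons_zero,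
      Fin.cons_succ]
    rw [sum_sum_mul_norm_add_sq _ (hp 0) total (hY 0),
      ih (fun j => hp j.succ) (fun j => hY j.succ)]

theorem sum_prod_mul_norm_average_sub_sq {α : Type*} [Fintype α] {m : ℕ} (hm : m ≠ 0)
    {p : α → ℝ} {X : α → E} {μ : E} (hp : ∑ a, p a = 1) (hμ : ∑ a, p a • X a = μ) :
    ∑ ω : Fin m → α, (∏ j, p (ω j)) * ‖(1 / (m : ℝ)) • ∑ j, X (ω j) - μ‖ ^ 2 =
      (1 / (m : ℝ)) * (∑ a, p a * ‖X a‖ ^ 2 - ‖μ‖ ^ 2) := by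
  have hm' : (m : ℝ) ≠ 0 := Nat.cast_ne_zero.mpr hm
  have centred : ∑ a, p a • (X a - μ) = 0 := by
    simp only [smul_sub, Finset.sum_sub_distrib, ← Finset.sum_smul, hμ, hp, one_smul, sub_self]
  have deviation (ω : Fin m → α) :
      (1 / (m : ℝ)) • ∑ j, X (ω j) - μ = (1 / (m : ℝ)) • ∑ j, (X (ω j) - μ) := by
    rw [Finset.sum_sub_distrib, Fin.sum_const, ← Nat.cast_smul_eq_nsmul ℝ, smul_sub, smul_smul,
      one_div_mul_cancel hm', one_smul]
  calc ∑ ω : Fin m → α, (∏ j, p (ω j)) * ‖(1 / (m : ℝ)) • ∑ j, X (ω j) - μ‖ ^ 2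
    _ = (1 / (m : ℝ)) ^ 2 *
          ∑ ω : Fin m → α, (∏ j, p (ω j)) * ‖∑ j, (X (ω j) - μ)‖ ^ 2 := by
      simp only [deviation, norm_smul, mul_pow, Real.norm_eq_abs, sq_abs, Finset.mul_sum,
        mul_left_comm]
    _ = (1 / (m : ℝ)) ^ 2 * (m * ∑ a, p a * ‖X a - μ‖ ^ 2) := by
      rw [sum_prod_mul_norm_sum_sq (fun _ => hp) (fun _ => centred), Fin.sum_const,
        nsmul_eq_mul]
    _ = (1 / (m : ℝ)) * (∑ a, p a * ‖X a‖ ^ 2 - ‖μ‖ ^ 2) := by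
      rw [sum_mul_norm_sub_sq hp hμ]
      field_simp

end WeightedSums

section ShardedSampling

variable {σ : Type*} {ι : σ → Type*} [∀ s, Fintype (ι s)] {E : Type*}

/-- The probability of drawing a given data point when its shard `s` is selected with probability
`f s` and the point is then selected uniformly within the shard. -/
noncomputable def drawProb (f : σ → ℝ) (a : Σ s, ι s) : ℝ :=
  f a.1 * (1 / (Fintype.card (ι a.1) : ℝ))

/-- The single-draw gradient estimator: the gradient at the drawn point, divided by the shard's
selection probability and multiplied by the shard's size. -/
noncomputable def drawEstimator [AddCommMonoid E] [Module ℝ E] (f : σ → ℝ) (v : ∀ s, ι s → E)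
    (a : Σ s, ι s) : E :=
  ((Fintype.card (ι a.1) : ℝ) / f a.1) • v a.1 a.2

variable [Fintype σ] {f : σ → ℝ}

theorem sum_drawProb [∀ s, Nonempty (ι s)] : ∑ a : Σ s, ι s, drawProb f a = ∑ s, f s := by
  rw [Fintype.sum_sigma]
  refine Finset.sum_congr rfl fun s _ => ?_
  calc ∑ i, drawProb f ⟨s, i⟩
    _ = ∑ _i : ι s, f s * (1 / (Fintype.card (ι s) : ℝ)) := rfl
    _ = f s := by
      rw [Finset.sum_const, Finset.card_univ, nsmul_eq_mul]
      field_simp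

theorem sum_drawProb_smul_drawEstimator [AddCommMonoid E] [Module ℝ E] (hf : ∀ s, f s ≠ 0)
    (v : ∀ s, ι s → E) :
    ∑ a, drawProb f a • drawEstimator f v a = ∑ s, ∑ i, v s i := by
  rw [Fintype.sum_sigma]
  refine Finset.sum_congr rfl fun s _ => Finset.sum_congr rfl fun i _ => ?_
  have : Nonempty (ι s) := ⟨i⟩
  have cancel : f s * (1 / (Fintype.card (ι s) : ℝ)) * (Fintype.card (ι s) / f s) = 1 := by
    have := hf s
    field_simp
  rw [drawProb, drawEstimator, smul_smul, cancel, one_smul]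

theorem sum_drawProb_mul_norm_drawEstimator_sq [SeminormedAddCommGroup E] [NormedSpace ℝ E]
    (hf : ∀ s, f s ≠ 0) (v : ∀ s, ι s → E) :
    ∑ a, drawProb f a * ‖drawEstimator f v a‖ ^ 2 =
      ∑ s, ((Fintype.card (ι s) : ℝ) / f s) * ∑ i, ‖v s i‖ ^ 2 := by
  simp only [Fintype.sum_sigma, Finset.mul_sum]
  refine Finset.sum_congr rfl fun s _ => Finset.sum_congr rfl fun i _ => ?_
  have : Nonempty (ι s) := ⟨i⟩
  have := hf s
  rw [drawProb, drawEstimator, norm_smul, mul_pow, Real.norm_eq_abs, sq_abs]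
  field_simp

theorem sum_drawProb_mul_norm_drawEstimator_sq_le [SeminormedAddCommGroup E] [NormedSpace ℝ E]
    (hf : ∀ s, 0 < f s) {v : ∀ s, ι s → E} {γ : σ → ℝ} (hγ : ∀ s i, ‖v s i‖ ≤ γ s) :
    ∑ a, drawProb f a * ‖drawEstimator f v a‖ ^ 2 ≤
      ∑ s, ((Fintype.card (ι s) : ℝ) ^ 2 / f s) * γ s ^ 2 := by
  rw [sum_drawProb_mul_norm_drawEstimator_sq fun s => (hf s).ne']
  refine Finset.sum_le_sum fun s _ => ?_
  have := hf s
  calc ((Fintype.card (ι s) : ℝ) / f s) * ∑ i, ‖v s i‖ ^ 2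
    _ ≤ ((Fintype.card (ι s) : ℝ) / f s) * ∑ _i : ι s, γ s ^ 2 := by
      gcongr with i
      exact hγ s i
    _ = ((Fintype.card (ι s) : ℝ) ^ 2 / f s) * γ s ^ 2 := by
      rw [Finset.sum_const, Finset.card_univ, nsmul_eq_mul]
      ring

theorem dsgld_variance_bound_general [∀ s, Nonempty (ι s)] [SeminormedAddCommGroup E]
    [InnerProductSpace ℝ E] {m : ℕ} (hm : 0 < m) (hf : ∀ s, 0 < f s) (hsum : ∑ s, f s = 1)
    {v : ∀ s, ι s → E} {γ : σ → ℝ} (hγ : ∀ s i, ‖v s i‖ ≤ γ s) {V : E}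
    (hV : V = ∑ s, ∑ i, v s i) :
    ∑ ω : Fin m → Σ s, ι s,
        (∏ j, drawProb f (ω j)) * ‖(1 / (m : ℝ)) • ∑ j, drawEstimator f v (ω j) - V‖ ^ 2
      ≤ (1 / (m : ℝ)) * ∑ s, ((Fintype.card (ι s) : ℝ) ^ 2 / f s) * γ s ^ 2 := by
  have unbiased : ∑ a, drawProb f a • drawEstimator f v a = V :=
    (sum_drawProb_smul_drawEstimator (fun s => (hf s).ne') v).trans hV.symm
  rw [sum_prod_mul_norm_average_sub_sq hm.ne' (sum_drawProb.trans hsum) unbiased]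
  gcongr
  exact (sub_le_self _ (sq_nonneg _)).trans (sum_drawProb_mul_norm_drawEstimator_sq_le hf hγ)

end ShardedSampling

/-- Variance bound for the DSGLD gradient estimator (core of Theorem 1). Each of the
`m` mini-batch elements is an independent draw `ω j = ⟨s_j, i_j⟩` that selects a
shard `s_j` with probability `f s_j` and then an index `i_j` uniformly within the
shard; the expectation is the corresponding finite weighted average over all tuples
of draws. -/
theorem dsgld_variance_bound (S d m : ℕ) (hS : 0 < S) (hd : 0 < d) (hm : 0 < m)
    (f : Fin S → ℝ) (hf : ∀ s, 0 < f s) (hsum : ∑ s, f s = 1)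
    (N : Fin S → ℕ) (hN : ∀ s, 0 < N s)
    (v : (s : Fin S) → Fin (N s) → EuclideanSpace ℝ (Fin d))
    (γ : Fin S → ℝ) (hγ : ∀ s i, ‖v s i‖ ≤ γ s)
    (V : EuclideanSpace ℝ (Fin d)) (hV : V = ∑ s, ∑ i, v s i) :
    ∑ ω : Fin m → Σ s : Fin S, Fin (N s),
        (∏ j, f (ω j).1 * (1 / (N (ω j).1 : ℝ))) *
          ‖(1 / (m : ℝ)) • (∑ j, ((N (ω j).1 : ℝ) / f (ω j).1) • v (ω j).1 (ω j).2)
            - V‖ ^ 2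
      ≤ (1 / (m : ℝ)) * ∑ s, ((N s : ℝ) ^ 2 / f s) * γ s ^ 2 := by
  have (s : Fin S) : Nonempty (Fin (N s)) := ⟨⟨0, hN s⟩⟩
  simpa only [drawProb, drawEstimator, Fintype.card_fin] using
    dsgld_variance_bound_general hm hf hsum hγ hV
end

section
/- (Supremum version of the Remark 3 bound.) Let N be a positive integer, let v_1, …, v_N : ℝ^D → ℝ^d and g : ℝ^D → ℝ^d be functions, and set V(θ) = ∑_{i=1}^{N} v_i(θ). Suppose the functions θ ↦ ‖g(θ) − V(θ)‖² and θ ↦ (1/N)‖V(θ)‖² + ∑_{i=1}^{N} ‖v_i(θ)‖² are bounded above. Then sup_θ (1/N) ∑_{i=1}^{N} ‖ v_i(θ) − (1/N) g(θ) ‖² ≤ (1/N²) sup_θ ‖ g(θ) − V(θ) ‖² + (1/N) sup_θ [ (1/N) ‖ V(θ) ‖² + ∑_{i=1}^{N} ‖ v_i(θ) ‖² ], and only the first term on the right-hand side depends on g. -/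
/-!
At each `θ`, completing the square in `g θ` turns `(1/N) ∑ i, ‖v i θ - (1/N) g θ‖²` into exactly
`(1/N²) ‖g θ - V θ‖² + (1/N) (∑ i, ‖v i θ‖² - (1/N) ‖V θ‖²)`, whose second summand is the variance
of the `v i θ` and does not involve `g`. Replacing `-‖V θ‖²` by `+‖V θ‖²` and taking suprema of the
two summands separately only enlarges the right-hand side.
-/

section

open Finset
open scoped RealInnerProductSpace

variable {ι E : Type*} [SeminormedAddCommGroup E] [InnerProductSpace ℝ E] {s : Finset ι}

theorem sum_norm_sub_sq_real (s : Finset ι) (v : ι → E) (c : E) :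
    ∑ i ∈ s, ‖v i - c‖ ^ 2 = ∑ i ∈ s, ‖v i‖ ^ 2 - 2 * ⟪∑ i ∈ s, v i, c⟫ + #s * ‖c‖ ^ 2 := by
  simp only [norm_sub_sq_real, sum_add_distrib, sum_sub_distrib, ← mul_sum, sum_inner, sum_const,
    nsmul_eq_mul]

theorem mean_norm_sub_smul_sq_eq (hs : s.Nonempty) (v : ι → E) (g : E) :
    (1 / (#s : ℝ)) * ∑ i ∈ s, ‖v i - (1 / (#s : ℝ)) • g‖ ^ 2 =
      (1 / (#s : ℝ) ^ 2) * ‖g - ∑ i ∈ s, v i‖ ^ 2 +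
        (1 / (#s : ℝ)) * (∑ i ∈ s, ‖v i‖ ^ 2 - (1 / (#s : ℝ)) * ‖∑ i ∈ s, v i‖ ^ 2) := by
  have card_ne_zero : (#s : ℝ) ≠ 0 := Nat.cast_ne_zero.mpr hs.card_ne_zero
  rw [sum_norm_sub_sq_real, norm_sub_sq_real g, real_inner_smul_right, norm_smul, mul_pow,
    Real.norm_eq_abs, sq_abs, real_inner_comm g]
  field_simp
  ring

theorem mean_norm_sub_smul_sq_le (hs : s.Nonempty) (v : ι → E) (g : E) :
    (1 / (#s : ℝ)) * ∑ i ∈ s, ‖v i - (1 / (#s : ℝ)) • g‖ ^ 2 ≤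
      (1 / (#s : ℝ) ^ 2) * ‖g - ∑ i ∈ s, v i‖ ^ 2 +
        (1 / (#s : ℝ)) * ((1 / (#s : ℝ)) * ‖∑ i ∈ s, v i‖ ^ 2 + ∑ i ∈ s, ‖v i‖ ^ 2) := by
  have normSq_nonneg : 0 ≤ (1 / (#s : ℝ)) * ‖∑ i ∈ s, v i‖ ^ 2 := by positivity
  rw [mean_norm_sub_smul_sq_eq hs]
  gcongr
  linarith

theorem remark3_sup_bound_general {Θ : Type*} [Nonempty Θ] (hs : s.Nonempty)
    (v : ι → Θ → E) (g V : Θ → E) (hV : ∀ θ, V θ = ∑ i ∈ s, v i θ)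
    (h1 : BddAbove (Set.range fun θ => ‖g θ - V θ‖ ^ 2))
    (h2 : BddAbove (Set.range fun θ =>
      (1 / (#s : ℝ)) * ‖V θ‖ ^ 2 + ∑ i ∈ s, ‖v i θ‖ ^ 2)) :
    (⨆ θ, (1 / (#s : ℝ)) * ∑ i ∈ s, ‖v i θ - (1 / (#s : ℝ)) • g θ‖ ^ 2) ≤
      (1 / (#s : ℝ) ^ 2) * (⨆ θ, ‖g θ - V θ‖ ^ 2) +
        (1 / (#s : ℝ)) * ⨆ θ, ((1 / (#s : ℝ)) * ‖V θ‖ ^ 2 + ∑ i ∈ s, ‖v i θ‖ ^ 2) := by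
  refine ciSup_le fun θ => ?_
  calc (1 / (#s : ℝ)) * ∑ i ∈ s, ‖v i θ - (1 / (#s : ℝ)) • g θ‖ ^ 2
    _ ≤ (1 / (#s : ℝ) ^ 2) * ‖g θ - V θ‖ ^ 2 +
          (1 / (#s : ℝ)) * ((1 / (#s : ℝ)) * ‖V θ‖ ^ 2 + ∑ i ∈ s, ‖v i θ‖ ^ 2) := by
      simpa only [hV] using mean_norm_sub_smul_sq_le hs (v · θ) (g θ)
    _ ≤ _ := by
      gcongr
      · exact le_ciSup h1 θ
      · exact le_ciSup h2 θ

end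

/-- Supremum version of the Remark 3 bound: taking suprema over the parameter
`θ ∈ ℝ^D` (which exist by the boundedness hypotheses),
`sup_θ (1/N) ∑ i, ‖v i θ − (1/N) g θ‖²` is at most
`(1/N²) sup_θ ‖g θ − V θ‖² + (1/N) sup_θ [(1/N) ‖V θ‖² + ∑ i, ‖v i θ‖²]`,
and only the first term on the right-hand side depends on `g`. -/
theorem remark3_sup_bound (N D d : ℕ) (hN : 0 < N) (hD : 0 < D) (hd : 0 < d)
    (v : Fin N → EuclideanSpace ℝ (Fin D) → EuclideanSpace ℝ (Fin d))
    (g : EuclideanSpace ℝ (Fin D) → EuclideanSpace ℝ (Fin d))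
    (V : EuclideanSpace ℝ (Fin D) → EuclideanSpace ℝ (Fin d))
    (hV : ∀ θ, V θ = ∑ i, v i θ)
    (h1 : BddAbove (Set.range fun θ => ‖g θ - V θ‖ ^ 2))
    (h2 : BddAbove (Set.range fun θ =>
        (1 / (N : ℝ)) * ‖V θ‖ ^ 2 + ∑ i, ‖v i θ‖ ^ 2)) :
    (⨆ θ, (1 / (N : ℝ)) * ∑ i, ‖v i θ - (1 / (N : ℝ)) • g θ‖ ^ 2)
      ≤ (1 / (N : ℝ) ^ 2) * (⨆ θ, ‖g θ - V θ‖ ^ 2)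
          + (1 / (N : ℝ)) *
              ⨆ θ, ((1 / (N : ℝ)) * ‖V θ‖ ^ 2 + ∑ i, ‖v i θ‖ ^ 2) := by
  have univ_nonempty : (Finset.univ : Finset (Fin N)).Nonempty := ⟨⟨0, hN⟩, Finset.mem_univ _⟩
  simpa only [Finset.card_fin] using remark3_sup_bound_general univ_nonempty v g V hV h1
    (by simpa only [Finset.card_fin] using h2)
end
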